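/- Fix an integer k ≥ 1 and apply the construction in the context with f = χ_k, M = 4k+2, ν = 0, a = k², and b = 2k+1, obtaining the sequence ξ(n). Then ξ(n) / [ cos(π/(2(2k+1))) · 2^(2n+2) · n! / (π^(3/2) · √n) · ((2k+1)/π²)^n · e^(π²/(8(2k+1))) ] → 1 as n → ∞. -/

import Mathlib

/-- The Fourier coefficient `G_f^{(ν)}(k)` of a function `f : ℤ → ℝ` of period `M`. -/
noncomputable def Gf (M : ℕ) (f : ℤ → ℝ) (ν : ℕ) (k : ℕ) : ℝ :=
  if ν = 0 then
    (2 / Real.sqrt M) * ∑ m ∈ Finset.range M, f m * Real.sin (2 * Real.pi * m * k / M)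
  else
    (2 / Real.sqrt M) * ∑ m ∈ Finset.range M, f m * Real.cos (2 * Real.pi * m * k / M)

/-- `C_n = (−1)^(n+1) (M^(2n+ν)/(2n+ν+1)) ∑_{m=1}^M f(m) B_{2n+ν+1}(m/M)`. -/
noncomputable def Cf (M : ℕ) (f : ℤ → ℝ) (ν : ℕ) (n : ℕ) : ℝ :=
  (-1) ^ (n + 1) * ((M : ℝ) ^ (2 * n + ν) / (2 * n + ν + 1)) *
    ∑ m ∈ Finset.Icc 1 M,
      f m * (((Polynomial.bernoulli (2 * n + ν + 1)).eval ((m : ℚ) / (M : ℚ)) : ℚ) : ℝ)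

/-- `D_n = b^(−n) ∑_{k=0}^n C(n,k) a^(n−k) C_k`. -/
noncomputable def Df (M : ℕ) (f : ℤ → ℝ) (ν a b : ℕ) (n : ℕ) : ℝ :=
  ((b : ℝ) ^ n)⁻¹ *
    ∑ k ∈ Finset.range (n + 1), (n.choose k : ℝ) * (a : ℝ) ^ (n - k) * Cf M f ν k

/-- The unsigned Stirling number of the first kind `s(n,j)`: the coefficient of `X^j`
in `X (X+1) (X+2) ⋯ (X+n−1)`. -/
noncomputable def stirling1 (n j : ℕ) : ℝ :=
  (∏ i ∈ Finset.range n, (Polynomial.X + Polynomial.C (i : ℝ))).coeff j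

/-- `ξ(0) = D_0` and `ξ(n) = (1/n!) ∑_{m=0}^{n−1} s(n, n−m) D_{n−m}` for `n ≥ 1`. -/
noncomputable def xif (M : ℕ) (f : ℤ → ℝ) (ν a b : ℕ) : ℕ → ℝ
  | 0 => Df M f ν a b 0
  | n + 1 => (1 / ((n + 1).factorial : ℝ)) *
      ∑ m ∈ Finset.range (n + 1), stirling1 (n + 1) (n + 1 - m) * Df M f ν a b (n + 1 - m)

/-- The odd periodic function `χ_k` of period `4k+2` with `χ_k(n) = 1` for
`n ≡ k, k+1 (mod 4k+2)`, `χ_k(n) = −1` for `n ≡ −k, −k−1 (mod 4k+2)`, and `0` otherwise. -/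
noncomputable def chiK (k : ℕ) (n : ℤ) : ℝ :=
  if n % (4 * k + 2) = (k : ℤ) % (4 * k + 2) ∨
      n % (4 * k + 2) = ((k : ℤ) + 1) % (4 * k + 2) then 1
  else if n % (4 * k + 2) = (-(k : ℤ)) % (4 * k + 2) ∨
      n % (4 * k + 2) = (-(k : ℤ) - 1) % (4 * k + 2) then -1
  else 0

/-!
Call `c` the amplitude of a sequence with `w n ∼ c · (2n)! · rⁿ`. By the Fourier expansion of the
Bernoulli polynomials, whose first mode dominates, `C_n` grows in this way with `r = (M / 2π)²`.
The passages from `C` to `D` and from `D` to `n! ξ` are transforms `∑ g(n, m) w(n - m)` whose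
coefficients are at most `n^(2m) B^m / m!`, while `(2(n - m))! / (2n)! ∼ (2n)^(-2m)`; so
dominated convergence gives the new amplitude as a series in the limits of `g(n, m) / n^(2m)`.
For the binomial transform only `m = 0` contributes and the amplitude is unchanged. For the
Stirling numbers `s(n, n - m) ∼ n^(2m) / (2^m m!)`, and it is multiplied by
`∑ (1 / (8r))^m / m! = exp (1 / (8r))`.
-/

open Filter Topology Finset Asymptotics
open scoped Nat Real

section Tannery

variable {𝕜 : Type*} [NormedField 𝕜] [CompleteSpace 𝕜]

theorem tendsto_sum_range_mul_sub_div {A w l : ℕ → 𝕜} {g : ℕ → ℕ → 𝕜} {c : 𝕜} {bound : ℕ → ℝ}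
    (hA : ∀ n, A n ≠ 0) (hw : Tendsto (fun n ↦ w n / A n) atTop (𝓝 c)) (hbound : Summable bound)
    (hg : ∀ n m, m ≤ n → ‖g n m * (A (n - m) / A n)‖ ≤ bound m)
    (hl : ∀ m, Tendsto (fun n ↦ g n m * (A (n - m) / A n)) atTop (𝓝 (l m))) :
    Tendsto (fun n ↦ (∑ m ∈ range (n + 1), g n m * w (n - m)) / A n) atTop
      (𝓝 ((∑' m, l m) * c)) := by
  obtain ⟨K, hK⟩ := hw.norm.bddAbove_range
  replace hK (n : ℕ) : ‖w n / A n‖ ≤ K := hK ⟨n, rfl⟩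
  have hbound_nonneg (m : ℕ) : 0 ≤ bound m := (norm_nonneg _).trans (hg m m le_rfl)
  let F (n m : ℕ) : 𝕜 :=
    if m ≤ n then g n m * (A (n - m) / A n) * (w (n - m) / A (n - m)) else 0
  have hF (n : ℕ) : (∑ m ∈ range (n + 1), g n m * w (n - m)) / A n = ∑' m, F n m := by
    rw [tsum_eq_sum (s := range (n + 1)), sum_div]
    · refine sum_congr rfl fun m hm ↦ ?_
      have := hA (n - m)
      simp only [F, if_pos (mem_range_succ_iff.mp hm)]
      field_simp
    · exact fun m hm ↦ if_neg (mt mem_range_succ_iff.mpr hm)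
  simp only [hF, ← tsum_mul_right]
  refine tendsto_tsum_of_dominated_convergence (hbound.mul_right K) (fun m ↦ ?_)
    (Eventually.of_forall fun n m ↦ ?_)
  · refine ((hl m).mul (hw.comp (tendsto_sub_atTop_nat m))).congr' ?_
    filter_upwards [eventually_ge_atTop m] with n hmn
    simp only [F, if_pos hmn, Function.comp_apply]
  · rcases le_or_gt m n with hmn | hmn
    · simp only [F, if_pos hmn, norm_mul _ (w _ / _)]
      exact mul_le_mul (hg n m hmn) (hK _) (norm_nonneg _) (hbound_nonneg m)
    · simp only [F, if_neg hmn.not_ge, norm_zero]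
      exact mul_nonneg (hbound_nonneg m) ((norm_nonneg _).trans (hK 0))

end Tannery

section FactorialGrowth

theorem pow_le_exp_one_pow_mul_descFactorial {N p : ℕ} (hp : p ≤ N) :
    (N : ℝ) ^ p ≤ Real.exp 1 ^ p * N.descFactorial p := by
  induction p generalizing N with
  | zero => simp
  | succ p ih =>
    obtain ⟨N, rfl⟩ := Nat.exists_eq_succ_of_ne_zero (by lia : N ≠ 0)
    have hpN : p ≤ N := by lia
    have succ_pow_le : ((N : ℝ) + 1) ^ p ≤ Real.exp 1 * (N : ℝ) ^ p := by
      rcases N.eq_zero_or_pos with rfl | hN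
      · simp [Nat.le_zero.mp hpN]
      · calc ((N : ℝ) + 1) ^ p = (1 + (N : ℝ)⁻¹) ^ p * (N : ℝ) ^ p := by
              rw [← mul_pow]; field_simp
          _ ≤ (1 + (N : ℝ)⁻¹) ^ N * (N : ℝ) ^ p := by gcongr; simp
          _ ≤ Real.exp 1 * (N : ℝ) ^ p := by gcongr; exact Real.one_add_inv_pow_le_exp
    rw [Nat.succ_descFactorial_succ]
    push_cast
    calc ((N : ℝ) + 1) ^ (p + 1) = (N + 1) * ((N : ℝ) + 1) ^ p := pow_succ' _ _
      _ ≤ (N + 1) * (Real.exp 1 * (Real.exp 1 ^ p * N.descFactorial p)) := by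
        gcongr
        exact succ_pow_le.trans (by gcongr; exact ih hpN)
      _ = Real.exp 1 ^ (p + 1) * ((N + 1) * N.descFactorial p) := by ring

theorem tendsto_pow_div_descFactorial (p : ℕ) :
    Tendsto (fun N : ℕ ↦ (N : ℝ) ^ p / N.descFactorial p) atTop (𝓝 1) := by
  refine (isEquivalent_iff_tendsto_one ?_).mp (isEquivalent_descFactorial p).symm
  filter_upwards [eventually_ge_atTop p] with N hN
  exact_mod_cast (Nat.descFactorial_pos.mpr hN).ne'

/-- `w n ∼ c · (dn)! · rⁿ`, the growth class preserved by the binomial and Stirling transforms.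
It is stated as a limit of quotients so that the amplitude `c` may vanish. -/
def HasFactorialGrowth (d : ℕ) (r c : ℝ) (w : ℕ → ℝ) : Prop :=
  Tendsto (fun n ↦ w n / ((d * n)! * r ^ n)) atTop (𝓝 c)

theorem factorial_mul_pow_sub_div {d n m : ℕ} {r : ℝ} (hr : r ≠ 0) (hmn : m ≤ n) :
    (((d * (n - m))! : ℝ) * r ^ (n - m)) / ((d * n)! * r ^ n) =
      1 / ((d * n).descFactorial (d * m) * r ^ m) := by
  have hle : d * m ≤ d * n := by gcongr
  have hdesc : ((d * n).descFactorial (d * m) : ℝ) ≠ 0 := by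
    exact_mod_cast (Nat.descFactorial_pos.mpr hle).ne'
  rw [← Nat.factorial_mul_descFactorial hle, ← pow_sub_mul_pow r hmn, Nat.mul_sub]
  push_cast
  field_simp

namespace HasFactorialGrowth

variable {d : ℕ} {r c : ℝ} {w : ℕ → ℝ}

theorem sum_range_mul_sub {B : ℝ} {g : ℕ → ℕ → ℝ} {l : ℕ → ℝ} (hd : d ≠ 0) (hr : r ≠ 0)
    (hw : HasFactorialGrowth d r c w)
    (hg : ∀ n m, m ≤ n → |g n m| ≤ B ^ m / m ! * (n : ℝ) ^ (d * m))
    (hl : ∀ m, Tendsto (fun n : ℕ ↦ g n m / (n : ℝ) ^ (d * m)) atTop (𝓝 (l m))) :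
    HasFactorialGrowth d r ((∑' m, l m / (d ^ d * r) ^ m) * c)
      fun n ↦ ∑ m ∈ range (n + 1), g n m * w (n - m) := by
  have hB : 0 ≤ B := by simpa using (abs_nonneg _).trans (hg 1 1 le_rfl)
  refine tendsto_sum_range_mul_sub_div (fun n ↦ by positivity) hw
    (Real.summable_pow_div_factorial (B * Real.exp 1 ^ d / (d ^ d * |r|)))
    (fun n m hmn ↦ ?_) (fun m ↦ ?_)
  · have hdesc : (0 : ℝ) < (d * n).descFactorial (d * m) := by
      exact_mod_cast Nat.descFactorial_pos.mpr (by gcongr)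
    have hpow : (n : ℝ) ^ (d * m) / (d * n).descFactorial (d * m) ≤
        Real.exp 1 ^ (d * m) / (d : ℝ) ^ (d * m) := by
      rw [div_le_div_iff₀ hdesc (by positivity), ← mul_pow, mul_comm (n : ℝ)]
      exact_mod_cast pow_le_exp_one_pow_mul_descFactorial (by gcongr : d * m ≤ d * n)
    rw [factorial_mul_pow_sub_div hr hmn, norm_mul, norm_div, norm_one, norm_mul, norm_pow]
    simp only [Real.norm_eq_abs, abs_of_pos hdesc]
    calc |g n m| * (1 / ((d * n).descFactorial (d * m) * |r| ^ m))
        ≤ B ^ m / m ! * (n : ℝ) ^ (d * m) * (1 / ((d * n).descFactorial (d * m) * |r| ^ m)) := by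
          gcongr; exact hg n m hmn
      _ = B ^ m / m ! / |r| ^ m * ((n : ℝ) ^ (d * m) / (d * n).descFactorial (d * m)) := by
          field_simp
      _ ≤ B ^ m / m ! / |r| ^ m * (Real.exp 1 ^ (d * m) / (d : ℝ) ^ (d * m)) := by gcongr
      _ = (B * Real.exp 1 ^ d / (d ^ d * |r|)) ^ m / m ! := by
          simp only [div_pow, mul_pow, ← pow_mul]; field_simp
  · have hdesc : Tendsto (fun n : ℕ ↦ ((d * n : ℕ) : ℝ) ^ (d * m) / (d * n).descFactorial (d * m))
        atTop (𝓝 1) :=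
      (tendsto_pow_div_descFactorial (d * m)).comp
        (tendsto_id.const_mul_atTop' (Nat.pos_of_ne_zero hd))
    have hlim := ((hl m).mul hdesc).div_const ((d ^ d * r) ^ m)
    rw [mul_one] at hlim
    refine hlim.congr' ?_
    filter_upwards [eventually_ge_atTop m, eventually_ne_atTop 0] with n hmn hn
    rw [factorial_mul_pow_sub_div hr hmn]
    push_cast
    simp only [mul_pow, ← pow_mul]
    field_simp

end HasFactorialGrowth

end FactorialGrowth

section Stirling

theorem stirling1_eq_stirlingFirst (n j : ℕ) : stirling1 n j = Nat.stirlingFirst n j := by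
  induction n generalizing j with
  | zero => cases j <;> simp [stirling1, Polynomial.coeff_one]
  | succ n ih =>
    simp only [stirling1] at ih ⊢
    rw [prod_range_succ, mul_add, Polynomial.coeff_add, Polynomial.coeff_mul_C]
    cases j with
    | zero =>
      rw [Polynomial.coeff_mul_X_zero, ih]
      cases n <;> simp
    | succ j =>
      rw [Polynomial.coeff_mul_X, ih, ih, Nat.stirlingFirst_succ_succ]
      push_cast
      ring

theorem stirlingFirst_succ_add_succ_mul (j m : ℕ) :
    Nat.stirlingFirst (j + 1 + (m + 1)) (j + 1) * (2 ^ (m + 1) * (m + 1)!) =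
      (2 * m + 2) * (j + 1 + m) * (Nat.stirlingFirst (j + 1 + m) (j + 1) * (2 ^ m * m !)) +
        Nat.stirlingFirst (j + (m + 1)) j * (2 ^ (m + 1) * (m + 1)!) := by
  rw [← add_assoc (j + 1), Nat.stirlingFirst_succ_succ, add_assoc j 1 m, add_comm 1 m,
    Nat.factorial_succ]
  ring

theorem pow_le_stirlingFirst_mul (j m : ℕ) :
    j ^ (2 * m) ≤ Nat.stirlingFirst (j + m) j * (2 ^ m * m !) := by
  induction m generalizing j with
  | zero => simp [Nat.stirlingFirst_self]
  | succ m ihm =>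
    induction j with
    | zero => simp
    | succ j ihj =>
      have bernoulli : (j + 1) ^ (2 * m + 2) ≤ (2 * m + 2) * (j + 1) ^ (2 * m + 1) +
          j ^ (2 * m + 2) := by
        have := pow_add_mul_le_add_pow_of_sq_nonneg (a := (j : ℤ) + 1) (b := -1)
          (by positivity) (by positivity) (by positivity) (by lia) (2 * m + 2)
        zify
        simp only [add_neg_cancel_right, Nat.add_succ_sub_one] at this
        push_cast at this
        linarith
      calc (j + 1) ^ (2 * (m + 1))
          ≤ (2 * m + 2) * (j + 1) ^ (2 * m + 1) + j ^ (2 * m + 2) := bernoulli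
        _ = (2 * m + 2) * (j + 1) * (j + 1) ^ (2 * m) + j ^ (2 * (m + 1)) := by ring
        _ ≤ (2 * m + 2) * (j + 1 + m) * (Nat.stirlingFirst (j + 1 + m) (j + 1) * (2 ^ m * m !)) +
            Nat.stirlingFirst (j + (m + 1)) j * (2 ^ (m + 1) * (m + 1)!) := by
          exact add_le_add (Nat.mul_le_mul (Nat.mul_le_mul_left _ (by lia)) (ihm (j + 1))) ihj
        _ = Nat.stirlingFirst (j + 1 + (m + 1)) (j + 1) * (2 ^ (m + 1) * (m + 1)!) :=
          (stirlingFirst_succ_add_succ_mul j m).symm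

theorem stirlingFirst_mul_le_pow (j m : ℕ) :
    Nat.stirlingFirst (j + m) j * (2 ^ m * m !) ≤ (j + m) ^ (2 * m) := by
  induction m generalizing j with
  | zero => simp [Nat.stirlingFirst_self]
  | succ m ihm =>
    induction j with
    | zero => simp
    | succ j ihj =>
      rw [stirlingFirst_succ_add_succ_mul]
      calc (2 * m + 2) * (j + 1 + m) * (Nat.stirlingFirst (j + 1 + m) (j + 1) * (2 ^ m * m !)) +
            Nat.stirlingFirst (j + (m + 1)) j * (2 ^ (m + 1) * (m + 1)!)
          ≤ (2 * m + 2) * (j + 1 + m) * (j + 1 + m) ^ (2 * m) + (j + (m + 1)) ^ (2 * (m + 1)) := by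
            gcongr
            exact ihm (j + 1)
        _ = (j + 1 + m) ^ (2 * m + 2) + (2 * m + 2) * (j + 1 + m) ^ (2 * m + 1) * 1 := by ring
        _ ≤ (j + 1 + (m + 1)) ^ (2 * (m + 1)) :=
          pow_add_mul_le_add_pow_of_sq_nonneg zero_le zero_le zero_le zero_le (2 * m + 2)

theorem tendsto_stirlingFirst_sub_div_pow (m : ℕ) :
    Tendsto (fun n : ℕ ↦ (Nat.stirlingFirst n (n - m) : ℝ) / (n : ℝ) ^ (2 * m)) atTop
      (𝓝 (1 / (2 ^ m * m !))) := by
  rw [← tendsto_add_atTop_iff_nat m]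
  have hlower : Tendsto (fun j : ℕ ↦ ((j : ℝ) / (j + m)) ^ (2 * m) / (2 ^ m * m !)) atTop
      (𝓝 (1 / (2 ^ m * m !))) := by
    simpa using ((tendsto_natCast_div_add_atTop (m : ℝ)).pow (2 * m)).div_const (2 ^ m * m ! : ℝ)
  refine tendsto_of_tendsto_of_tendsto_of_le_of_le' hlower tendsto_const_nhds ?_ ?_
  all_goals
    filter_upwards [eventually_gt_atTop 0] with j hj
    rw [Nat.add_sub_cancel]
    push_cast
  · rw [div_pow, div_right_comm]
    gcongr
    rw [div_le_iff₀ (by positivity)]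
    exact_mod_cast pow_le_stirlingFirst_mul j m
  · rw [div_le_div_iff₀ (by positivity) (by positivity), one_mul]
    exact_mod_cast stirlingFirst_mul_le_pow j m

theorem HasFactorialGrowth.stirlingTransform {r c : ℝ} {w : ℕ → ℝ} (hr : r ≠ 0)
    (hw : HasFactorialGrowth 2 r c w) :
    HasFactorialGrowth 2 r (Real.exp (1 / (8 * r)) * c)
      fun n ↦ ∑ m ∈ range (n + 1), (Nat.stirlingFirst n (n - m) : ℝ) * w (n - m) := by
  have hexp : Real.exp (1 / (8 * r)) =
      ∑' m : ℕ, 1 / (2 ^ m * m ! : ℝ) / (((2 : ℕ) : ℝ) ^ 2 * r) ^ m := by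
    rw [Real.exp_eq_exp_ℝ, NormedSpace.exp_eq_tsum_div]
    refine tsum_congr fun m ↦ ?_
    rw [div_div, one_div_pow, div_div, mul_right_comm, ← mul_pow]
    ring_nf
  rw [hexp]
  refine hw.sum_range_mul_sub (B := 1 / 2) two_ne_zero hr (fun n m hmn ↦ ?_)
    tendsto_stirlingFirst_sub_div_pow
  have hle : (Nat.stirlingFirst n (n - m) : ℝ) * (2 ^ m * m !) ≤ (n : ℝ) ^ (2 * m) := by
    have := stirlingFirst_mul_le_pow (n - m) m
    rw [Nat.sub_add_cancel hmn] at this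
    exact_mod_cast this
  rw [Nat.abs_cast, one_div_pow, div_div, one_div_mul_eq_div, le_div_iff₀ (by positivity)]
  exact hle

end Stirling

section Binomial

theorem tendsto_choose_div_pow_two_mul {m : ℕ} (hm : m ≠ 0) :
    Tendsto (fun n : ℕ ↦ (n.choose m : ℝ) / (n : ℝ) ^ (2 * m)) atTop (𝓝 0) := by
  have hpow : (fun x : ℝ ↦ x ^ m) =o[atTop] fun x ↦ x ^ (2 * m) :=
    isLittleO_pow_pow_atTop_of_lt (by lia)
  exact ((isTheta_choose m).isBigO.trans_isLittleO
    (hpow.comp_tendsto tendsto_natCast_atTop_atTop)).tendsto_div_nhds_zero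

theorem choose_le_pow_two_mul_div_factorial (n m : ℕ) :
    (n.choose m : ℝ) ≤ (n : ℝ) ^ (2 * m) / m ! := by
  refine (Nat.choose_le_pow_div m n).trans ?_
  gcongr ?_ / _
  rw [mul_comm, pow_mul]
  exact_mod_cast Nat.le_self_pow two_ne_zero (n ^ m)

theorem HasFactorialGrowth.binomialTransform {r c : ℝ} {w : ℕ → ℝ} (hr : r ≠ 0)
    (hw : HasFactorialGrowth 2 r c w) (a : ℝ) :
    HasFactorialGrowth 2 r c
      fun n ↦ ∑ j ∈ range (n + 1), (n.choose j : ℝ) * a ^ (n - j) * w j := by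
  have hflip (n : ℕ) : ∑ j ∈ range (n + 1), (n.choose j : ℝ) * a ^ (n - j) * w j =
      ∑ m ∈ range (n + 1), (n.choose m : ℝ) * a ^ m * w (n - m) := by
    rw [← sum_flip]
    refine sum_congr rfl fun m hm ↦ ?_
    have hmn := mem_range_succ_iff.mp hm
    rw [Nat.choose_symm hmn, Nat.sub_sub_self hmn]
  have hsum : ∑' m : ℕ, (Pi.single 0 1 : ℕ → ℝ) m / (((2 : ℕ) : ℝ) ^ 2 * r) ^ m = 1 := by
    rw [tsum_eq_single 0 fun m hm ↦ by simp [hm]]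
    simp
  simp only [hflip]
  rw [← one_mul c, ← hsum]
  refine hw.sum_range_mul_sub (B := |a|) two_ne_zero hr (fun n m _ ↦ ?_) (fun m ↦ ?_)
  · rw [abs_mul, Nat.abs_cast, abs_pow, div_mul_comm, mul_comm _ (|a| ^ m), mul_comm _ (|a| ^ m)]
    gcongr
    exact choose_le_pow_two_mul_div_factorial n m
  · rcases eq_or_ne m 0 with rfl | hm
    · simp
    · simpa [hm, div_mul_eq_mul_div] using (tendsto_choose_div_pow_two_mul hm).mul_const (a ^ m)

end Binomial

section Bernoulli

theorem tendsto_tsum_one_div_nat_pow_mul {u : ℕ → ℝ} {K : ℝ} (hu : ∀ j, |u j| ≤ K) :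
    Tendsto (fun s : ℕ ↦ ∑' j : ℕ, 1 / (j : ℝ) ^ s * u j) atTop (𝓝 (u 1)) := by
  rw [← tsum_pi_single 1 (u 1)]
  refine tendsto_tsum_of_dominated_convergence (bound := fun j : ℕ ↦ 1 / (j : ℝ) ^ 2 * K)
    ((Real.summable_one_div_nat_pow.mpr one_lt_two).mul_right K) (fun j ↦ ?_) ?_
  · rcases eq_or_ne j 1 with rfl | hj
    · simp
    · rw [Pi.single_eq_of_ne hj, ← zero_mul (u j)]
      refine Tendsto.mul_const _ ?_
      rcases j.eq_zero_or_pos with rfl | hj0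
      · refine tendsto_const_nhds.congr' ?_
        filter_upwards [eventually_ne_atTop 0] with s hs
        simp [hs]
      · simp only [← one_div_pow]
        refine tendsto_pow_atTop_nhds_zero_of_lt_one (by positivity) ?_
        rw [div_lt_one (by positivity)]
        exact_mod_cast (by lia : 1 < j)
  · filter_upwards [eventually_ge_atTop 2] with s hs j
    rw [norm_mul, Real.norm_of_nonneg (by positivity : (0 : ℝ) ≤ 1 / (j : ℝ) ^ s)]
    gcongr ?_ * ?_
    · rcases j.eq_zero_or_pos with rfl | hj
      · simp [(by lia : s ≠ 0)]
      · gcongr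
        exact_mod_cast hj
    · exact hu j

theorem tendsto_bernoulli_odd_eval {x : ℝ} (hx : x ∈ Set.Icc (0 : ℝ) 1) :
    Tendsto (fun n : ℕ ↦ (-1 : ℝ) ^ (n + 1) * (2 * π) ^ (2 * n + 1) / 2 / (2 * n + 1)! *
        ((Polynomial.bernoulli (2 * n + 1)).map (algebraMap ℚ ℝ)).eval x) atTop
      (𝓝 (Real.sin (2 * π * x))) := by
  have hodd : Tendsto (fun n : ℕ ↦ 2 * n + 1) atTop atTop :=
    tendsto_atTop_mono (fun n ↦ (by lia : n ≤ 2 * n + 1)) tendsto_id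
  have hseries := (tendsto_tsum_one_div_nat_pow_mul (u := fun j ↦ Real.sin (2 * π * j * x))
    fun j ↦ Real.abs_sin_le_one _).comp hodd
  simp only [Nat.cast_one, mul_one] at hseries
  refine hseries.congr' ?_
  filter_upwards [eventually_ne_atTop 0] with n hn
  exact (hasSum_one_div_nat_pow_mul_sin hn hx).tsum_eq

end Bernoulli

section CentralBinomial

theorem two_mul_factorial_eq_centralBinom_mul (n : ℕ) :
    (2 * n)! = n.centralBinom * n ! ^ 2 := by
  rw [Nat.centralBinom_eq_two_mul_choose, two_mul, sq, ← mul_assoc,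
    Nat.add_choose_mul_factorial_mul_factorial]

theorem centralBinom_isEquivalent :
    (fun n : ℕ ↦ (n.centralBinom : ℝ)) ~[atTop] fun n ↦ 4 ^ n / √(π * n) := by
  have hstirling := Stirling.factorial_isEquivalent_stirling
  have hquot := (hstirling.comp_tendsto (tendsto_id.const_mul_atTop' two_pos)).div (hstirling.pow 2)
  refine (hquot.congr_left (Eventually.of_forall fun n ↦ ?_)).congr_right ?_
  · simp only [Pi.div_apply, Pi.pow_apply, Function.comp_apply, id_eq,
      two_mul_factorial_eq_centralBinom_mul, Nat.cast_mul, Nat.cast_pow]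
    field_simp
  · filter_upwards [eventually_gt_atTop 0] with n hn
    have hpow : (2 * (n : ℝ) / Real.exp 1) ^ (2 * n) = 4 ^ n * ((n / Real.exp 1) ^ n) ^ 2 := by
      rw [mul_div_assoc, mul_pow, pow_mul 2, ← pow_mul _ n 2, mul_comm n 2]
      norm_num
    have hsqrt : √(2 * (2 * n) * π) = 2 * √(π * n) := by
      rw [← Real.sqrt_sq zero_le_two, ← Real.sqrt_mul (by positivity), Real.sqrt_sq zero_le_two]
      ring_nf
    have hsq : √(π * n) ^ 2 = π * n := Real.sq_sqrt (by positivity)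
    simp only [Pi.div_apply, Pi.pow_apply, Function.comp_apply, id_eq, Nat.cast_mul,
      Nat.cast_ofNat, mul_pow, hpow, hsqrt, Real.sq_sqrt (by positivity : 0 ≤ 2 * (n : ℝ) * π)]
    field_simp
    rw [hsq]

end CentralBinomial

section Coefficients

variable {M : ℕ} (f : ℤ → ℝ)

theorem Cf_zero_div_factorial_mul_pow (hM : M ≠ 0) (n : ℕ) :
    Cf M f 0 n / ((2 * n)! * ((M / (2 * π)) ^ 2) ^ n) =
      (∑ m ∈ Icc 1 M, f m * ((-1 : ℝ) ^ (n + 1) * (2 * π) ^ (2 * n + 1) / 2 / (2 * n + 1)! *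
        ((Polynomial.bernoulli (2 * n + 1)).map (algebraMap ℚ ℝ)).eval ((m : ℝ) / M))) / π := by
  have heval (m : ℕ) :
      (((Polynomial.bernoulli (2 * n + 1)).eval ((m : ℚ) / (M : ℚ)) : ℚ) : ℝ) =
        ((Polynomial.bernoulli (2 * n + 1)).map (algebraMap ℚ ℝ)).eval ((m : ℝ) / M) := by
    simpa using (Polynomial.eval_map_apply (algebraMap ℚ ℝ) ((m : ℚ) / M)).symm
  simp only [Cf, add_zero, heval, mul_left_comm (f _), ← mul_sum]
  rw [Nat.factorial_succ, ← pow_mul, div_pow, pow_succ (2 * π)]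
  push_cast
  rw [add_zero]
  field_simp

theorem hasFactorialGrowth_Cf_zero (hM : M ≠ 0) :
    HasFactorialGrowth 2 ((M / (2 * π)) ^ 2)
      ((∑ m ∈ Icc 1 M, f m * Real.sin (2 * π * (m / M))) / π) (Cf M f 0) := by
  simp only [HasFactorialGrowth, Cf_zero_div_factorial_mul_pow f hM]
  refine (tendsto_finsetSum _ fun m hm ↦ (tendsto_bernoulli_odd_eval ?_).const_mul _).div_const π
  refine ⟨by positivity, div_le_one_of_le₀ ?_ (by positivity)⟩
  exact_mod_cast (mem_Icc.mp hm).2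

theorem hasFactorialGrowth_Df_zero (hM : M ≠ 0) (a : ℕ) {b : ℕ} (hb : b ≠ 0) :
    HasFactorialGrowth 2 ((M / (2 * π)) ^ 2 / b)
      ((∑ m ∈ Icc 1 M, f m * Real.sin (2 * π * (m / M))) / π) (Df M f 0 a b) := by
  refine ((hasFactorialGrowth_Cf_zero f hM).binomialTransform (by positivity) a).congr fun n ↦ ?_
  rw [Df, div_pow _ (b : ℝ)]
  field_simp

theorem xif_eq_sum_range_succ_stirlingFirst (ν a b n : ℕ) :
    xif M f ν a b n =
      (∑ m ∈ range (n + 1), (Nat.stirlingFirst n (n - m) : ℝ) * Df M f ν a b (n - m)) / n ! := by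
  cases n with
  | zero => simp [xif]
  | succ n => simp [xif, sum_range_succ _ (n + 1), stirling1_eq_stirlingFirst, div_eq_inv_mul]

theorem tendsto_xif_zero_div (hM : M ≠ 0) (a : ℕ) {b : ℕ} (hb : b ≠ 0) :
    Tendsto (fun n ↦ xif M f 0 a b n / (4 ^ n * n ! / √n * ((M / (2 * π)) ^ 2 / b) ^ n)) atTop
      (𝓝 (Real.exp (π ^ 2 * b / (2 * M ^ 2)) *
        (∑ m ∈ Icc 1 M, f m * Real.sin (2 * π * (m / M))) / π ^ (3 / 2 : ℝ))) := by
  have hsum := (hasFactorialGrowth_Df_zero f hM a hb).stirlingTransform (by positivity)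
  have hbinom : Tendsto (fun n : ℕ ↦ (n.centralBinom : ℝ) / (4 ^ n / √(π * n))) atTop (𝓝 1) := by
    refine (isEquivalent_iff_tendsto_one ?_).mp centralBinom_isEquivalent
    filter_upwards [eventually_ne_atTop 0] with n hn
    positivity
  have hpi : π ^ (3 / 2 : ℝ) = π * √π := by
    rw [Real.sqrt_eq_rpow, ← Real.rpow_one_add' Real.pi_nonneg] <;> norm_num
  have hexp : (1 : ℝ) / (8 * ((M / (2 * π)) ^ 2 / b)) = π ^ 2 * b / (2 * M ^ 2) := by
    field_simp; norm_num
  have hlim := (hsum.mul hbinom).div_const √π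
  rw [hexp, mul_one, ← mul_div_assoc, div_div, ← hpi] at hlim
  refine hlim.congr' ?_
  filter_upwards [eventually_ne_atTop 0] with n hn
  rw [xif_eq_sum_range_succ_stirlingFirst, two_mul_factorial_eq_centralBinom_mul, Nat.cast_mul,
    Nat.cast_pow, Real.sqrt_mul Real.pi_nonneg]
  have := n.centralBinom_ne_zero
  field_simp

end Coefficients

section Character

variable {k : ℕ}

theorem chiK_natCast_eq (hk : k ≠ 0) {m : ℕ} (hm : m ≤ 4 * k + 2) :
    chiK k m = (if m = k then 1 else 0) + (if m = k + 1 then 1 else 0) -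
      (if m = 3 * k + 1 then 1 else 0) - (if m = 3 * k + 2 then 1 else 0) := by
  have hneg : (-(k : ℤ)) % (4 * k + 2) = 3 * k + 2 := by
    rw [← Int.add_emod_right, Int.emod_eq_of_lt] <;> lia
  have hneg_sub : (-(k : ℤ) - 1) % (4 * k + 2) = 3 * k + 1 := by
    rw [← Int.add_emod_right, Int.emod_eq_of_lt] <;> lia
  rw [chiK, hneg, hneg_sub, Int.emod_eq_of_lt (a := k) (by lia) (by lia),
    Int.emod_eq_of_lt (a := k + 1) (by lia) (by lia)]
  rcases hm.eq_or_lt with rfl | hm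
  · push_cast
    rw [Int.emod_self]
    split_ifs <;> grind
  · rw [Int.emod_eq_of_lt (a := m) (by lia) (by lia)]
    norm_cast
    split_ifs <;> lia

theorem sum_chiK_mul (hk : k ≠ 0) (g : ℕ → ℝ) :
    ∑ m ∈ Icc 1 (4 * k + 2), chiK k m * g m =
      g k + g (k + 1) - g (3 * k + 1) - g (3 * k + 2) := by
  rw [sum_congr rfl fun m hm ↦ by rw [chiK_natCast_eq hk (mem_Icc.mp hm).2]]
  simp only [sub_mul, add_mul, ite_mul, one_mul, zero_mul, sum_sub_distrib, sum_add_distrib,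
    sum_ite_eq', mem_Icc]
  repeat rw [if_pos (by lia)]

theorem sum_chiK_mul_sin (hk : k ≠ 0) :
    ∑ m ∈ Icc 1 (4 * k + 2), chiK k m * Real.sin (2 * π * (m / (4 * k + 2 : ℕ))) =
      4 * Real.cos (π / (2 * (2 * k + 1))) := by
  rw [sum_chiK_mul hk fun m ↦ Real.sin (2 * π * (m / (4 * k + 2 : ℕ)))]
  set θ := π / (2 * (2 * (k : ℝ) + 1)) with hθ
  have hk_angle : 2 * π * ((k : ℕ) / (4 * k + 2 : ℕ)) = π / 2 - θ := by
    rw [hθ]; push_cast; field_simp; ring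
  have hk_succ_angle : 2 * π * ((k + 1 : ℕ) / (4 * k + 2 : ℕ)) = θ + π / 2 := by
    rw [hθ]; push_cast; field_simp; ring
  have hthree_angle : 2 * π * ((3 * k + 1 : ℕ) / (4 * k + 2 : ℕ)) = π / 2 - θ + π := by
    rw [hθ]; push_cast; field_simp; ring
  have hthree_succ_angle : 2 * π * ((3 * k + 2 : ℕ) / (4 * k + 2 : ℕ)) = θ + π / 2 + π := by
    rw [hθ]; push_cast; field_simp; ring
  rw [hk_angle, hk_succ_angle, hthree_angle, hthree_succ_angle, Real.sin_add_pi, Real.sin_add_pi,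
    Real.sin_pi_div_two_sub, Real.sin_add_pi_div_two]
  ring

theorem cos_pi_div_two_mul_two_mul_add_one_pos (hk : k ≠ 0) :
    0 < Real.cos (π / (2 * (2 * k + 1))) := by
  have hk_pos : (0 : ℝ) < k := by positivity
  refine Real.cos_pos_of_mem_Ioo ⟨by linarith [Real.pi_pos, (by positivity :
    0 < π / (2 * (2 * (k : ℝ) + 1)))], ?_⟩
  gcongr
  linarith

end Character

/-- The coefficients `ξ_{𝒢_k}(n)` of `𝒢_k(1−q)` (obtained from the
construction with `f = χ_k`, `M = 4k+2`, `ν = 0`, `a = k²`, `b = 2k+1`) satisfy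
`ξ_{𝒢_k}(n) ~ cos(π/(2(2k+1))) 2^(2n+2) n! / (π^(3/2) √n) · ((2k+1)/π²)^n
· e^(π²/(8(2k+1)))` as `n → ∞`. -/
theorem G_series_asymptotic (k : ℕ) (hk : 1 ≤ k) :
    Filter.Tendsto
      (fun n : ℕ =>
        xif (4 * k + 2) (chiK k) 0 (k ^ 2) (2 * k + 1) n /
          (Real.cos (Real.pi / (2 * (2 * k + 1))) * 2 ^ (2 * n + 2) *
            (n.factorial : ℝ) / (Real.pi ^ ((3 : ℝ) / 2) * Real.sqrt n) *
            ((2 * k + 1 : ℝ) / Real.pi ^ 2) ^ n *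
            Real.exp (Real.pi ^ 2 / (8 * (2 * k + 1)))))
      Filter.atTop (nhds 1) := by
  have hk0 : k ≠ 0 := Nat.one_le_iff_ne_zero.mp hk
  have hcos := cos_pi_div_two_mul_two_mul_add_one_pos hk0
  have hlim := tendsto_xif_zero_div (chiK k) (by lia : 4 * k + 2 ≠ 0) (k ^ 2)
    (by lia : 2 * k + 1 ≠ 0)
  rw [sum_chiK_mul_sin hk0] at hlim
  have hr : (((4 * k + 2 : ℕ) : ℝ) / (2 * π)) ^ 2 / (2 * k + 1 : ℕ) = (2 * k + 1) / π ^ 2 := by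
    push_cast; field_simp; ring
  have hexp : π ^ 2 * ((2 * k + 1 : ℕ) : ℝ) / (2 * (4 * k + 2 : ℕ) ^ 2) =
      π ^ 2 / (8 * (2 * k + 1)) := by
    push_cast; field_simp; ring
  rw [hr, hexp] at hlim
  have hratio := hlim.div_const (Real.exp (π ^ 2 / (8 * (2 * k + 1))) *
    (4 * Real.cos (π / (2 * (2 * k + 1)))) / π ^ (3 / 2 : ℝ))
  rw [div_self (by positivity)] at hratio
  refine hratio.congr' ?_
  filter_upwards [eventually_ne_atTop 0] with n hn
  have htwo_pow : (2 : ℝ) ^ (2 * n + 2) = 4 ^ n * 4 := by rw [pow_add, pow_mul]; norm_num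
  rw [htwo_pow]
  field_simp
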